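/- (Second derivative of entropy for gamma noise) Let X be a nonnegative real random variable whose moment generating function exists, with density f_X, and let W be an independent Gamma(α,1) random variable with α ≥ 3. For a > 0 and k ≥ 1 write g_k(w) = w^{k−1} e^{−w}/Γ(k) for w ≥ 0, f_{Y_k}(y;a) = ∫ f_X(x) a^{−1/2} g_k((y−x)/√a) dx, f_Y = f_{Y_α}, m(y;a) = ∫ x f_X(x) a^{−1/2} g_α((y−x)/√a) dx / f_Y(y;a), v(y;a) = ∫ (y−x)² f_X(x) a^{−1/2} g_α((y−x)/√a) dx / f_Y(y;a), and m_{α−1}(y;a), v analogues with g_{α−1}. Then h(a) = −∫ f_Y log f_Y dy satisfies d²/da² h(a) = −(1/(4a³)) ∫ f_{Y_{α−2}}(y;a) v(y;a) dy − (1/(4a²√a)) ∫ f_{Y_{α−1}}(y;a) m(y;a) dy + ((α−1)/(4a²√a)) ∫ f_{Y_{α−1}}(y;a) · v(y;a)/(y − m_{α−1}(y;a)) dy − J_a − (1/(4a²√a)) (√a − E[X]), where J_a = ∫ (∂/∂a f_Y(y;a))² / f_Y(y;a) dy and m_{α−1}(y;a) = ∫ x f_X(x) a^{−1/2} g_{α−1}((y−x)/√a)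 dx / f_{Y_{α−1}}(y;a). -/

import Mathlib

open MeasureTheory Filter

/-
Write `F_k` for the output density with noise of shape `k` and rate `r = 1/√a`. The gamma density
turns multiplication by the noise and differentiation into shifts of the shape:
`∂F_k/∂r = (k/r) (F_k − F_{k+1})`, `∂F_k/∂y = r (F_{k−1} − F_k)`, and weighting the integrand of
`F_k` by `y − x` gives `(k/r) F_{k+1}`. Differentiating `−∫ F_α log F_α` twice in the parameter thus
gives differences of the cross entropies `−∫ F_{α+n} log F_α` for consecutive `n`, and `−J_a` from
the derivative of the logarithm. Integrating by parts in `y` turns these differences into integrals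
of `F_{α−1}/F_α`, and a second integration by parts produces `F_{α−2}/F_α` and `(F_{α−1}/F_α)²`,
which the weighting identity expresses through `v`, `m` and `m_{α−1}`. The ratios of densities are
controlled by `F_{k+1} ≤ (r/k) y F_k` and by the Cauchy–Schwarz bound
`F_{k+1}² ≤ ((k+1)/k) F_k F_{k+2}`.
-/

open ProbabilityTheory Set Topology
open Real (exp log Gamma)

section GammaPDF

variable {k r z : ℝ}

lemma gammaPDFReal_of_neg (k r : ℝ) (hz : z < 0) : gammaPDFReal k r z = 0 :=
  if_neg hz.not_ge

lemma gammaPDFReal_of_nonneg (k r : ℝ) (hz : 0 ≤ z) :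
    gammaPDFReal k r z = r ^ k / Gamma k * z ^ (k - 1) * exp (-(r * z)) :=
  if_pos hz

lemma integrable_gammaPDFReal (hk : 0 < k) (hr : 0 < r) : Integrable (gammaPDFReal k r) := by
  refine ⟨(measurable_gammaPDFReal k r).aestronglyMeasurable, ?_⟩
  rw [hasFiniteIntegral_iff_ofReal (ae_of_all _ (gammaPDFReal_nonneg hk hr))]
  exact (lintegral_gammaPDF_eq_one hk hr).trans_lt ENNReal.one_lt_top

lemma integral_gammaPDFReal (hk : 0 < k) (hr : 0 < r) : ∫ z, gammaPDFReal k r z = 1 := by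
  rw [integral_eq_lintegral_of_nonneg_ae (ae_of_all _ (gammaPDFReal_nonneg hk hr))
    (measurable_gammaPDFReal k r).aestronglyMeasurable]
  exact congrArg ENNReal.toReal (lintegral_gammaPDF_eq_one hk hr)

lemma mul_gammaPDFReal (hk : 0 < k) (hr : 0 < r) (z : ℝ) :
    z * gammaPDFReal k r z = k / r * gammaPDFReal (k + 1) r z := by
  rcases lt_or_ge z 0 with hz | hz
  · simp only [gammaPDFReal_of_neg _ _ hz, mul_zero]
  · have hpow : z ^ (k + 1 - 1) = z ^ (k - 1) * z := by
      rw [← Real.rpow_add_one' hz (by linarith)]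
      ring_nf
    have hΓ : Gamma k ≠ 0 := (Real.Gamma_pos_of_pos hk).ne'
    rw [gammaPDFReal_of_nonneg _ _ hz, gammaPDFReal_of_nonneg _ _ hz, hpow,
      Real.Gamma_add_one hk.ne', Real.rpow_add_one hr.ne']
    field_simp

lemma sq_mul_gammaPDFReal (hk : 0 < k) (hr : 0 < r) (z : ℝ) :
    z ^ 2 * gammaPDFReal k r z = k * (k + 1) / r ^ 2 * gammaPDFReal (k + 2) r z := by
  have h₁ := mul_gammaPDFReal hk hr z
  have h₂ := mul_gammaPDFReal (by linarith : 0 < k + 1) hr z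
  rw [show k + 1 + 1 = k + 2 by ring] at h₂
  linear_combination z * h₁ + k / r * h₂

lemma exists_eventually_gammaPDFReal_le_mul_exp {c : ℝ} (hk : 1 ≤ k) (hr : 0 < r) (hc : c < r) :
    ∃ C, 0 ≤ C ∧ ∀ᶠ s in 𝓝 r, ∀ z, gammaPDFReal k s z ≤ C * exp (-(c * z)) := by
  obtain ⟨d, hcd, hdr⟩ := exists_between hc
  have : 0 < Gamma k := Real.Gamma_pos_of_pos (by linarith)
  have hd : 0 < d - c := sub_pos.2 hcd
  set M := ((k - 1) / (d - c)) ^ (k - 1)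
  have : 0 ≤ M := Real.rpow_nonneg (div_nonneg (by linarith) hd.le) _
  refine ⟨(2 * r) ^ k / Gamma k * M, by positivity, ?_⟩
  filter_upwards [lt_mem_nhds hdr, lt_mem_nhds hr, gt_mem_nhds (by linarith : r < 2 * r)]
    with s hds hs hsr z
  rcases lt_or_ge z 0 with hz | hz
  · rw [gammaPDFReal_of_neg _ _ hz]
    positivity
  have hpow : z ^ (k - 1) ≤ M * exp ((d - c) * z) := by
    simpa only [abs_of_nonneg hz, abs_of_pos hd]
      using rpow_abs_le_mul_exp_abs z (sub_nonneg.2 hk) hd.ne'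
  calc gammaPDFReal k s z = s ^ k / Gamma k * z ^ (k - 1) * exp (-(s * z)) :=
        gammaPDFReal_of_nonneg _ _ hz
    _ ≤ (2 * r) ^ k / Gamma k * (M * exp ((d - c) * z)) * exp (-(d * z)) := by gcongr
    _ = (2 * r) ^ k / Gamma k * M * (exp ((d - c) * z) * exp (-(d * z))) := by ring
    _ = (2 * r) ^ k / Gamma k * M * exp (-(c * z)) := by
        rw [← Real.exp_add]
        ring_nf

lemma exists_eventually_gammaPDFReal_le (hk : 1 ≤ k) (hr : 0 < r) :
    ∃ C, ∀ᶠ s in 𝓝 r, ∀ z, gammaPDFReal k s z ≤ C := by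
  obtain ⟨C, -, hC⟩ := exists_eventually_gammaPDFReal_le_mul_exp hk hr hr
  exact ⟨C, hC.mono fun s h z => by simpa using h z⟩

lemma exists_abs_gammaPDFReal_le (hk : 1 ≤ k) (hr : 0 < r) :
    ∃ C, ∀ z, |gammaPDFReal k r z| ≤ C := by
  obtain ⟨C, hC⟩ := exists_eventually_gammaPDFReal_le hk hr
  refine ⟨C, fun z => ?_⟩
  rw [abs_of_nonneg (gammaPDFReal_nonneg (by linarith) hr z)]
  exact hC.self_of_nhds z

lemma hasDerivAt_gammaPDFReal_rate (hk : 0 < k) (hr : 0 < r) (z : ℝ) :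
    HasDerivAt (fun s => gammaPDFReal k s z)
      (k / r * (gammaPDFReal k r z - gammaPDFReal (k + 1) r z)) r := by
  rcases lt_or_ge z 0 with hz | hz
  · simpa only [gammaPDFReal_of_neg _ _ hz, sub_self, mul_zero] using hasDerivAt_const r (0 : ℝ)
  have hpow : HasDerivAt (fun s : ℝ => s ^ k) (k * r ^ (k - 1)) r :=
    Real.hasDerivAt_rpow_const (Or.inl hr.ne')
  have hexp : HasDerivAt (fun s => exp (-(s * z))) (exp (-(r * z)) * -(1 * z)) r :=
    ((hasDerivAt_id r).mul_const z).neg.exp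
  have key := ((hpow.div_const (Gamma k)).mul_const (z ^ (k - 1))).mul hexp
  simp only [gammaPDFReal_of_nonneg _ _ hz] at key ⊢
  refine key.congr_deriv ?_
  rw [mul_sub, ← gammaPDFReal_of_nonneg (k + 1) r hz, ← mul_gammaPDFReal hk hr,
    gammaPDFReal_of_nonneg _ _ hz, Real.rpow_sub_one hr.ne']
  ring

lemma hasDerivWithinAt_gammaPDFReal_Ici (hk : 2 ≤ k) (hr : 0 < r) (hz : 0 ≤ z) :
    HasDerivWithinAt (gammaPDFReal k r) (r * (gammaPDFReal (k - 1) r z - gammaPDFReal k r z))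
      (Ici 0) z := by
  have hpow : HasDerivAt (fun z : ℝ => z ^ (k - 1)) ((k - 1) * z ^ (k - 1 - 1)) z :=
    Real.hasDerivAt_rpow_const (Or.inr (by linarith))
  have hexp : HasDerivAt (fun z => exp (-(r * z))) (exp (-(r * z)) * -(r * 1)) z :=
    ((hasDerivAt_id z).const_mul r).neg.exp
  have hΓ : Gamma k = (k - 1) * Gamma (k - 1) := by
    rw [← Real.Gamma_add_one (by linarith : k - 1 ≠ 0), sub_add_cancel]
  have hΓ' : Gamma (k - 1) ≠ 0 := (Real.Gamma_pos_of_pos (by linarith)).ne'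
  have hk' : k - 1 ≠ 0 := by linarith
  refine ((((hpow.const_mul _).mul hexp).congr_deriv ?_).hasDerivWithinAt.congr
    (fun t ht => gammaPDFReal_of_nonneg k r ht) (gammaPDFReal_of_nonneg k r hz))
  rw [gammaPDFReal_of_nonneg _ _ hz, gammaPDFReal_of_nonneg _ _ hz, hΓ, Real.rpow_sub_one hr.ne' k]
  field_simp
  ring

lemma hasDerivAt_gammaPDFReal (hk : 2 ≤ k) (hr : 0 < r) (hz : z ≠ 0) :
    HasDerivAt (gammaPDFReal k r) (r * (gammaPDFReal (k - 1) r z - gammaPDFReal k r z)) z := by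
  rcases hz.lt_or_gt with hz | hz
  · rw [gammaPDFReal_of_neg _ _ hz, gammaPDFReal_of_neg _ _ hz, sub_zero, mul_zero]
    refine (hasDerivAt_const z (0 : ℝ)).congr_of_eventuallyEq ?_
    filter_upwards [gt_mem_nhds hz] with t ht using gammaPDFReal_of_neg _ _ ht
  · exact (hasDerivWithinAt_gammaPDFReal_Ici hk hr hz.le).hasDerivAt (Ici_mem_nhds hz)

lemma gammaPDFReal_max_zero (hk : 1 < k) (r z : ℝ) :
    gammaPDFReal k r (max z 0) = gammaPDFReal k r z := by
  rcases lt_or_ge z 0 with hz | hz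
  · rw [max_eq_right hz.le, gammaPDFReal_of_neg _ _ hz, gammaPDFReal_of_nonneg _ _ le_rfl,
      Real.zero_rpow (by linarith), mul_zero, zero_mul]
  · rw [max_eq_left hz]

lemma exists_lipschitzWith_gammaPDFReal (hk : 2 ≤ k) (hr : 0 < r) :
    ∃ C, LipschitzWith C (gammaPDFReal k r) := by
  obtain ⟨B, hB⟩ := exists_abs_gammaPDFReal_le (by linarith : 1 ≤ k) hr
  obtain ⟨B', hB'⟩ := exists_abs_gammaPDFReal_le (by linarith : 1 ≤ k - 1) hr
  have hLip : LipschitzOnWith (r * (B' + B)).toNNReal (gammaPDFReal k r) (Ici 0) := by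
    refine (convex_Ici 0).lipschitzOnWith_of_nnnorm_hasDerivWithin_le
      (fun z hz => hasDerivWithinAt_gammaPDFReal_Ici hk hr hz) fun z _ => ?_
    rw [← norm_toNNReal, Real.norm_eq_abs, abs_mul, abs_of_pos hr]
    gcongr
    exact (abs_sub _ _).trans (add_le_add (hB' z) (hB z))
  have hmax : LipschitzWith 1 fun z : ℝ => max z 0 := LipschitzWith.id.max_const 0
  have hcomp := hLip.comp hmax.lipschitzOnWith (s := univ) fun z _ => le_max_right z 0
  have hmax_eq : (gammaPDFReal k r ∘ fun z => max z 0) = gammaPDFReal k r :=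
    funext (gammaPDFReal_max_zero (by linarith) r)
  exact ⟨_, lipschitzOnWith_univ.1 (hmax_eq ▸ hcomp)⟩

lemma inv_mul_gammaPDFReal_div {s : ℝ} (hs : 0 < s) (k z : ℝ) :
    s⁻¹ * gammaPDFReal k 1 (z / s) = gammaPDFReal k s⁻¹ z := by
  rcases lt_or_ge z 0 with hz | hz
  · rw [gammaPDFReal_of_neg _ _ hz, gammaPDFReal_of_neg _ _ (div_neg_of_neg_of_pos hz hs), mul_zero]
  · rw [gammaPDFReal_of_nonneg _ _ hz, gammaPDFReal_of_nonneg _ _ (div_nonneg hz hs.le),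
      Real.div_rpow hz hs.le, Real.one_rpow, Real.inv_rpow hs.le, Real.rpow_sub_one hs.ne']
    field_simp

lemma gammaPDFReal_one_right (k z : ℝ) :
    gammaPDFReal k 1 z = if 0 ≤ z then z ^ (k - 1) * exp (-z) / Gamma k else 0 := by
  simp only [gammaPDFReal, Real.one_rpow, one_mul]
  split_ifs <;> ring

end GammaPDF

/-- The convolution of `f` with the gamma density of shape `k` and rate `r`. For `r = (√a)⁻¹` and
`f` the density of `X`, this is the density `f_{Y_k}(·; a)` of the channel output. -/
noncomputable def gammaConv (f : ℝ → ℝ) (k r y : ℝ) : ℝ :=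
  ∫ x, f x * gammaPDFReal k r (y - x)

section GammaConv

variable {f : ℝ → ℝ} {k r : ℝ}

lemma aestronglyMeasurable_mul_gammaPDFReal (hf : AEStronglyMeasurable f) (k r y : ℝ) :
    AEStronglyMeasurable fun x => f x * gammaPDFReal k r (y - x) :=
  hf.mul ((measurable_gammaPDFReal k r).comp
    (measurable_const.sub measurable_id)).aestronglyMeasurable

lemma integrable_mul_gammaPDFReal (hf : Integrable f) (hk : 1 ≤ k) (hr : 0 < r) (y : ℝ) :
    Integrable fun x => f x * gammaPDFReal k r (y - x) := by
  obtain ⟨C, hC⟩ := exists_abs_gammaPDFReal_le hk hr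
  exact hf.mul_bdd ((measurable_gammaPDFReal k r).comp
    (measurable_const.sub measurable_id)).aestronglyMeasurable (ae_of_all _ fun x => hC (y - x))

lemma gammaConv_nonneg (hf₀ : ∀ x, 0 ≤ f x) (hk : 0 < k) (hr : 0 < r) (y : ℝ) :
    0 ≤ gammaConv f k r y :=
  integral_nonneg fun x => mul_nonneg (hf₀ x) (gammaPDFReal_nonneg hk hr _)

lemma gammaConv_eq_zero_iff (hf : Integrable f) (hf₀ : ∀ x, 0 ≤ f x) (hk : 1 ≤ k) (hr : 0 < r)
    {y : ℝ} : gammaConv f k r y = 0 ↔ ∀ᵐ x, x < y → f x = 0 := by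
  have hk₀ : 0 < k := by linarith
  rw [gammaConv, integral_eq_zero_iff_of_nonneg
    (fun x => mul_nonneg (hf₀ x) (gammaPDFReal_nonneg hk₀ hr _))
    (integrable_mul_gammaPDFReal hf hk hr y)]
  constructor <;> intro h
  · filter_upwards [h] with x hx hxy
    exact (mul_eq_zero.1 hx).resolve_right (gammaPDFReal_pos hk₀ hr (sub_pos.2 hxy)).ne'
  · filter_upwards [h, Measure.ae_ne volume y] with x hx hne
    rcases hne.lt_or_gt with hxy | hxy
    · simp only [hx hxy, zero_mul, Pi.zero_apply]
    · simp only [gammaPDFReal_of_neg _ _ (sub_neg.2 hxy), mul_zero, Pi.zero_apply]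

lemma gammaConv_eq_zero_of_eq_zero (hf : Integrable f) (hf₀ : ∀ x, 0 ≤ f x) (hk : 1 ≤ k)
    (hr : 0 < r) {y l s : ℝ} (hl : 1 ≤ l) (hs : 0 < s) (hy : gammaConv f k r y = 0) :
    gammaConv f l s y = 0 :=
  (gammaConv_eq_zero_iff hf hf₀ hl hs).2 ((gammaConv_eq_zero_iff hf hf₀ hk hr).1 hy)

lemma gammaConv_of_neg (hf_neg : ∀ x < 0, f x = 0) (k r : ℝ) {y : ℝ} (hy : y < 0) :
    gammaConv f k r y = 0 := by
  refine integral_eq_zero_of_ae (ae_of_all _ fun x => ?_)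
  rcases lt_or_ge x 0 with hx | hx
  · simp only [hf_neg x hx, zero_mul, Pi.zero_apply]
  · simp only [gammaPDFReal_of_neg _ _ (by linarith : y - x < 0), mul_zero, Pi.zero_apply]

lemma gammaConv_eq_convolution (f : ℝ → ℝ) (k r : ℝ) :
    gammaConv f k r = convolution f (gammaPDFReal k r) (ContinuousLinearMap.mul ℝ ℝ) volume :=
  rfl

lemma integrable_gammaConv (hf : Integrable f) (hk : 0 < k) (hr : 0 < r) :
    Integrable (gammaConv f k r) :=
  hf.integrable_convolution (ContinuousLinearMap.mul ℝ ℝ) (integrable_gammaPDFReal hk hr)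

lemma integral_gammaConv (hf : Integrable f) (hk : 0 < k) (hr : 0 < r) :
    ∫ y, gammaConv f k r y = ∫ x, f x := by
  rw [gammaConv_eq_convolution, integral_convolution _ hf (integrable_gammaPDFReal hk hr),
    integral_gammaPDFReal hk hr, ContinuousLinearMap.mul_apply', mul_one]

lemma integral_sq_sub_mul_mul_gammaPDFReal (f : ℝ → ℝ) (hk : 0 < k) (hr : 0 < r) (y : ℝ) :
    ∫ x, (y - x) ^ 2 * f x * gammaPDFReal k r (y - x) =
      k * (k + 1) / r ^ 2 * gammaConv f (k + 2) r y := by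
  rw [gammaConv, ← integral_const_mul]
  congr with x
  linear_combination f x * sq_mul_gammaPDFReal hk hr (y - x)

lemma integral_id_mul_mul_gammaPDFReal (hf : Integrable f) (hk : 1 ≤ k) (hr : 0 < r) (y : ℝ) :
    ∫ x, x * f x * gammaPDFReal k r (y - x) =
      y * gammaConv f k r y - k / r * gammaConv f (k + 1) r y := by
  simp only [gammaConv]
  rw [← integral_const_mul, ← integral_const_mul,
    ← integral_sub ((integrable_mul_gammaPDFReal hf hk hr y).const_mul _)
      ((integrable_mul_gammaPDFReal hf (by linarith) hr y).const_mul _)]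
  congr with x
  linear_combination -f x * mul_gammaPDFReal (by linarith : 0 < k) hr (y - x)

lemma mul_gammaConv (hf : Integrable f) (hk : 1 ≤ k) (hr : 0 < r) (y : ℝ) :
    y * gammaConv f k r y =
      gammaConv (fun x => x * f x) k r y + k / r * gammaConv f (k + 1) r y :=
  sub_eq_iff_eq_add.1 (integral_id_mul_mul_gammaPDFReal hf hk hr y).symm

lemma integrable_mul_gammaConv (hf : Integrable f) (hxf : Integrable fun x => x * f x) (hk : 1 ≤ k)
    (hr : 0 < r) : Integrable fun y => y * gammaConv f k r y := by
  simp_rw [mul_gammaConv hf hk hr]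
  exact (integrable_gammaConv hxf (by linarith) hr).fun_add
    ((integrable_gammaConv hf (by linarith) hr).const_mul _)

lemma integral_mul_gammaConv (hf : Integrable f) (hxf : Integrable fun x => x * f x) (hk : 1 ≤ k)
    (hr : 0 < r) : ∫ y, y * gammaConv f k r y = (∫ x, x * f x) + k / r * ∫ x, f x := by
  have hk₀ : 0 < k := by linarith
  have hk₁ : 0 < k + 1 := by linarith
  simp_rw [mul_gammaConv hf hk hr]
  rw [integral_add (integrable_gammaConv hxf hk₀ hr)
    ((integrable_gammaConv hf hk₁ hr).const_mul _), integral_const_mul,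
    integral_gammaConv hxf hk₀ hr, integral_gammaConv hf hk₁ hr]

lemma gammaConv_add_one_le (hf : Integrable f) (hf₀ : ∀ x, 0 ≤ f x) (hk : 1 ≤ k) (hr : 0 < r)
    {a : ℝ} (ha : ∀ᵐ x, x < a → f x = 0) (y : ℝ) :
    gammaConv f (k + 1) r y ≤ r / k * ((y - a) * gammaConv f k r y) := by
  have hk₀ : 0 < k := by linarith
  have hle : k / r * gammaConv f (k + 1) r y ≤ (y - a) * gammaConv f k r y := by
    rw [gammaConv, gammaConv, ← integral_const_mul, ← integral_const_mul]
    refine integral_mono_ae ((integrable_mul_gammaPDFReal hf (by linarith) hr y).const_mul _)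
      ((integrable_mul_gammaPDFReal hf hk hr y).const_mul _) (ha.mono fun x hx => ?_)
    have hp := mul_gammaPDFReal hk₀ hr (y - x)
    rcases lt_or_ge x a with hxa | hxa
    · simp only [hx hxa, zero_mul, mul_zero, le_refl]
    · calc k / r * (f x * gammaPDFReal (k + 1) r (y - x))
          = (y - x) * (f x * gammaPDFReal k r (y - x)) := by linear_combination -f x * hp
        _ ≤ (y - a) * (f x * gammaPDFReal k r (y - x)) :=
          mul_le_mul_of_nonneg_right (by linarith)
            (mul_nonneg (hf₀ x) (gammaPDFReal_nonneg hk₀ hr _))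
  calc gammaConv f (k + 1) r y = r / k * (k / r * gammaConv f (k + 1) r y) := by field_simp
    _ ≤ r / k * ((y - a) * gammaConv f k r y) := by gcongr

lemma gammaConv_add_nat_le (hf : Integrable f) (hf₀ : ∀ x, 0 ≤ f x) (hk : 1 ≤ k) (hr : 0 < r)
    {a : ℝ} (ha : ∀ᵐ x, x < a → f x = 0) (n : ℕ) (y : ℝ) :
    gammaConv f (k + n) r y ≤ (r / k * |y - a|) ^ n * gammaConv f k r y := by
  have : 0 < k := by linarith
  induction n with
  | zero => simp
  | succ n ih =>
    have hkn : 1 ≤ k + n := by linarith [n.cast_nonneg (α := ℝ)]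
    have hF := gammaConv_nonneg hf₀ (by linarith : 0 < k + n) hr y
    calc gammaConv f (k + (n + 1 : ℕ)) r y = gammaConv f (k + n + 1) r y := by
          push_cast; ring_nf
      _ ≤ r / (k + n) * ((y - a) * gammaConv f (k + n) r y) :=
          gammaConv_add_one_le hf hf₀ hkn hr ha y
      _ ≤ r / (k + n) * (|y - a| * gammaConv f (k + n) r y) := by
          gcongr
          exact le_abs_self _
      _ ≤ r / k * (|y - a| * gammaConv f (k + n) r y) := by
          gcongr
          exact le_add_of_nonneg_right n.cast_nonneg
      _ ≤ r / k * (|y - a| * ((r / k * |y - a|) ^ n * gammaConv f k r y)) := by gcongr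
      _ = (r / k * |y - a|) ^ (n + 1) * gammaConv f k r y := by ring

lemma gammaConv_add_one_sq_le (hf : Integrable f) (hf₀ : ∀ x, 0 ≤ f x) (hk : 1 ≤ k) (hr : 0 < r)
    (y : ℝ) : gammaConv f (k + 1) r y ^ 2 ≤
      (k + 1) / k * (gammaConv f k r y * gammaConv f (k + 2) r y) := by
  have hk₀ : 0 < k := by linarith
  have hint (l : ℝ) (hl : 1 ≤ l) := integrable_mul_gammaPDFReal hf hl hr y
  have hquad (l : ℝ) : 0 ≤ gammaConv f k r y * (l * l)
      + -2 * (k / r) * gammaConv f (k + 1) r y * l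
      + k * (k + 1) / r ^ 2 * gammaConv f (k + 2) r y := by
    suffices h : ∫ x, f x * gammaPDFReal k r (y - x) * (y - x - l) ^ 2 =
        gammaConv f k r y * (l * l) + -2 * (k / r) * gammaConv f (k + 1) r y * l
          + k * (k + 1) / r ^ 2 * gammaConv f (k + 2) r y from
      h ▸ integral_nonneg fun x =>
        mul_nonneg (mul_nonneg (hf₀ x) (gammaPDFReal_nonneg hk₀ hr _)) (sq_nonneg _)
    have h₀ := (hint k hk).mul_const (l * l)
    have h₁ := ((hint (k + 1) (by linarith)).const_mul (-2 * (k / r))).mul_const l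
    have h₂ := (hint (k + 2) (by linarith)).const_mul (k * (k + 1) / r ^ 2)
    simp only [gammaConv]
    rw [← integral_const_mul, ← integral_const_mul, ← integral_mul_const, ← integral_mul_const,
      ← integral_add h₀ h₁, ← integral_add (h₀.fun_add h₁) h₂]
    congr with x
    linear_combination -2 * l * f x * mul_gammaPDFReal hk₀ hr (y - x)
      + f x * sq_mul_gammaPDFReal hk₀ hr (y - x)
  have hdiscrim := discrim_le_zero hquad
  have hkr : 0 < 4 * k ^ 2 / r ^ 2 := by positivity
  refine le_of_mul_le_mul_left ?_ hkr
  calc 4 * k ^ 2 / r ^ 2 * gammaConv f (k + 1) r y ^ 2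
      = (-2 * (k / r) * gammaConv f (k + 1) r y) ^ 2 := by ring
    _ ≤ 4 * gammaConv f k r y * (k * (k + 1) / r ^ 2 * gammaConv f (k + 2) r y) :=
        sub_nonpos.1 hdiscrim
    _ = 4 * k ^ 2 / r ^ 2 *
          ((k + 1) / k * (gammaConv f k r y * gammaConv f (k + 2) r y)) := by
        field_simp

lemma hasDerivAt_gammaConv_rate (hf : Integrable f) (hk : 1 ≤ k) (hr : 0 < r) (y : ℝ) :
    HasDerivAt (fun s => gammaConv f k s y)
      (k / r * (gammaConv f k r y - gammaConv f (k + 1) r y)) r := by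
  have hk₀ : 0 < k := by linarith
  obtain ⟨B, hB⟩ := exists_eventually_gammaPDFReal_le hk hr
  obtain ⟨B', hB'⟩ := exists_eventually_gammaPDFReal_le (by linarith : 1 ≤ k + 1) hr
  have hmeas (l s : ℝ) := aestronglyMeasurable_mul_gammaPDFReal hf.1 l s y
  have hnear : ∀ᶠ s in 𝓝 r, r / 2 < s ∧ (∀ z, gammaPDFReal k s z ≤ B) ∧
      ∀ z, gammaPDFReal (k + 1) s z ≤ B' :=
    (lt_mem_nhds (half_lt_self hr)).and (hB.and hB')
  have key := (hasDerivAt_integral_of_dominated_loc_of_deriv_le (μ := volume) (𝕜 := ℝ)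
    (F := fun s x => f x * gammaPDFReal k s (y - x))
    (F' := fun s x =>
      f x * (k / s * (gammaPDFReal k s (y - x) - gammaPDFReal (k + 1) s (y - x))))
    (bound := fun x => |f x| * (k / (r / 2) * (B + B')))
    hnear (Eventually.of_forall (hmeas k)) (integrable_mul_gammaPDFReal hf hk hr y)
    ((((hmeas k r).sub (hmeas (k + 1) r)).const_mul (k / r)).congr (ae_of_all _ fun x => ?_))
    (ae_of_all _ ?_) (hf.abs.mul_const _) (ae_of_all _ ?_)).2
  · refine key.congr_deriv ?_
    rw [gammaConv, gammaConv, ← integral_sub (integrable_mul_gammaPDFReal hf hk hr y)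
      (integrable_mul_gammaPDFReal hf (by linarith) hr y), ← integral_const_mul]
    congr with x
    ring
  · simp only [Pi.sub_apply]
    ring
  · rintro x s ⟨hs, hsB, hsB'⟩
    have hs₀ : 0 < s := (half_pos hr).trans hs
    have h₀ := gammaPDFReal_nonneg hk₀ hs₀ (y - x)
    have h₁ := gammaPDFReal_nonneg (by linarith : 0 < k + 1) hs₀ (y - x)
    rw [Real.norm_eq_abs, abs_mul, abs_mul, abs_of_pos (div_pos hk₀ hs₀)]
    gcongr
    rw [abs_le]
    constructor <;> linarith [hsB (y - x), hsB' (y - x)]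
  · rintro x s ⟨hs, -⟩
    exact (hasDerivAt_gammaPDFReal_rate hk₀ ((half_pos hr).trans hs) (y - x)).const_mul _

lemma hasDerivAt_gammaConv (hf : Integrable f) (hk : 2 ≤ k) (hr : 0 < r) (y : ℝ) :
    HasDerivAt (gammaConv f k r) (r * (gammaConv f (k - 1) r y - gammaConv f k r y)) y := by
  obtain ⟨C, hC⟩ := exists_lipschitzWith_gammaPDFReal hk hr
  have hmeas (l y : ℝ) := aestronglyMeasurable_mul_gammaPDFReal hf.1 l r y
  have key := (hasDerivAt_integral_of_dominated_loc_of_lip (μ := volume) (𝕜 := ℝ)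
    (F := fun y x => f x * gammaPDFReal k r (y - x))
    (F' := fun x => f x * (r * (gammaPDFReal (k - 1) r (y - x) - gammaPDFReal k r (y - x))))
    (bound := fun x => |f x| * C)
    univ_mem (Eventually.of_forall (hmeas k))
    (integrable_mul_gammaPDFReal hf (by linarith) hr y)
    ((((hmeas (k - 1) y).sub (hmeas k y)).const_mul r).congr (ae_of_all _ fun x => ?_))
    (ae_of_all _ fun x => ?_) (hf.abs.mul_const _) ?_).2
  · refine key.congr_deriv ?_
    rw [gammaConv, gammaConv, ← integral_sub
      (integrable_mul_gammaPDFReal hf (by linarith) hr y)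
      (integrable_mul_gammaPDFReal hf (by linarith) hr y), ← integral_const_mul]
    congr with x
    ring
  · simp only [Pi.sub_apply]
    ring
  · refine LipschitzOnWith.of_dist_le_mul fun u _ w _ => ?_
    have huw := hC.dist_le_mul (u - x) (w - x)
    rw [Real.dist_eq, dist_sub_right] at huw
    rw [Real.coe_nnabs, abs_of_nonneg (by positivity), Real.dist_eq, ← mul_sub, abs_mul, mul_assoc]
    gcongr
  · filter_upwards [Measure.ae_ne volume y] with x hx
    exact ((hasDerivAt_gammaPDFReal hk hr (sub_ne_zero.2 hx.symm)).comp_sub_const y x).const_mul _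

lemma continuous_gammaConv (hf : Integrable f) (hk : 2 ≤ k) (hr : 0 < r) :
    Continuous (gammaConv f k r) :=
  continuous_iff_continuousAt.2 fun y => (hasDerivAt_gammaConv hf hk hr y).continuousAt

end GammaConv

/-- `u s y`, for `s` near `r`, vanishes for `y < 0` and decays exponentially in `y ≥ 0`, uniformly
in `s`. This is the domination used to integrate over `y` and to differentiate such integrals with
respect to the parameter. -/
def ExpDominatedAt (u : ℝ → ℝ → ℝ) (r : ℝ) : Prop :=
  ∃ C c, 0 ≤ C ∧ 0 < c ∧
    ∀ᶠ s in 𝓝 r, ∀ y, |u s y| ≤ (Ici 0).indicator (fun y => C * exp (-(c * y))) y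

lemma integrable_indicator_Ici_mul_exp (C : ℝ) {c : ℝ} (hc : 0 < c) :
    Integrable ((Ici 0).indicator fun y => C * exp (-(c * y))) := by
  rw [integrable_indicator_iff measurableSet_Ici, integrableOn_Ici_iff_integrableOn_Ioi]
  simpa only [neg_mul, IntegrableOn] using (exp_neg_integrableOn_Ioi 0 hc).const_mul C

lemma abs_mul_log_le {t : ℝ} (ht : 0 ≤ t) : |t * log t| ≤ 2 * (√t * (1 + t)) := by
  rcases ht.eq_or_lt with rfl | ht
  · simp
  have hsqrt : 0 < √t := Real.sqrt_pos.2 ht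
  have hsq : √t ^ 2 = t := Real.sq_sqrt ht.le
  have hlog : log t = 2 * log √t := by
    rw [Real.log_sqrt ht.le]
    ring
  have hupper : log √t ≤ √t := (Real.log_le_sub_one_of_pos hsqrt).trans (by linarith)
  have hlower : -(√t)⁻¹ ≤ log √t :=
    le_trans (by linarith) (Real.one_sub_inv_le_log_of_pos hsqrt)
  have habs : |log √t| ≤ (√t)⁻¹ + √t :=
    abs_le.2 ⟨by linarith, hupper.trans (by linarith [inv_pos.2 hsqrt])⟩
  calc |t * log t| = 2 * (t * |log √t|) := by
        rw [hlog, abs_mul, abs_mul, abs_of_pos ht, abs_two]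
        ring
    _ ≤ 2 * (t * ((√t)⁻¹ + √t)) := by gcongr
    _ = 2 * (√t * (1 + t)) := by
        nth_rewrite 1 [← hsq]
        field_simp
        rw [hsq]

namespace ExpDominatedAt

variable {u v : ℝ → ℝ → ℝ} {r : ℝ}

lemma integrable (hu : ExpDominatedAt u r) (hmeas : AEStronglyMeasurable (u r)) :
    Integrable (u r) := by
  obtain ⟨C, c, -, hc, hu⟩ := hu
  exact (integrable_indicator_Ici_mul_exp C hc).mono' hmeas (ae_of_all _ hu.self_of_nhds)

lemma hasDerivAt_integral {u' : ℝ → ℝ → ℝ} (hu : ExpDominatedAt u r) (hu' : ExpDominatedAt u' r)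
    (hmeas : ∀ᶠ s in 𝓝 r, AEStronglyMeasurable (u s)) (hmeas' : AEStronglyMeasurable (u' r))
    (hderiv : ∀ᶠ s in 𝓝 r, ∀ y, HasDerivAt (fun s => u s y) (u' s y) s) :
    HasDerivAt (fun s => ∫ y, u s y) (∫ y, u' r y) r := by
  obtain ⟨C, c, -, hc, hbound⟩ := hu'
  exact (hasDerivAt_integral_of_dominated_loc_of_deriv_le (hbound.and hderiv) hmeas
    (hu.integrable hmeas.self_of_nhds) hmeas' (ae_of_all _ fun y s hs => hs.1 y)
    (integrable_indicator_Ici_mul_exp C hc) (ae_of_all _ fun y s hs => hs.2 y)).2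

lemma add (hu : ExpDominatedAt u r) (hv : ExpDominatedAt v r) :
    ExpDominatedAt (fun s y => u s y + v s y) r := by
  obtain ⟨C, c, hC, hc, hu⟩ := hu
  obtain ⟨D, d, hD, hd, hv⟩ := hv
  refine ⟨C + D, min c d, add_nonneg hC hD, lt_min hc hd, ?_⟩
  filter_upwards [hu, hv] with s hus hvs y
  refine (abs_add_le _ _).trans ((add_le_add (hus y) (hvs y)).trans ?_)
  by_cases hy : y ∈ Ici (0 : ℝ)
  · simp only [indicator_of_mem hy]
    rw [add_mul]
    have hy₀ : 0 ≤ y := hy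
    gcongr
    · exact min_le_left c d
    · exact min_le_right c d
  · simp only [indicator_of_notMem hy, add_zero, le_refl]

lemma mul_of_continuousAt {w : ℝ → ℝ} (hu : ExpDominatedAt u r) (hw : ContinuousAt w r) :
    ExpDominatedAt (fun s y => w s * u s y) r := by
  obtain ⟨C, c, hC, hc, hu⟩ := hu
  have hw_bdd : ∀ᶠ s in 𝓝 r, |w s| < |w r| + 1 := hw.abs.eventually_lt_const (lt_add_one _)
  refine ⟨(|w r| + 1) * C, c, by positivity, hc, ?_⟩
  filter_upwards [hu, hw_bdd] with s hus hws y
  calc |w s * u s y| = |w s| * |u s y| := abs_mul _ _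
    _ ≤ (|w r| + 1) * (Ici 0).indicator (fun y => C * exp (-(c * y))) y :=
        mul_le_mul hws.le (hus y) (abs_nonneg _) (by positivity)
    _ = (Ici 0).indicator (fun y => (|w r| + 1) * C * exp (-(c * y))) y := by
        simp only [indicator_apply, mul_ite, mul_zero, mul_assoc]

lemma const_mul (hu : ExpDominatedAt u r) (w : ℝ) : ExpDominatedAt (fun s y => w * u s y) r :=
  hu.mul_of_continuousAt continuousAt_const

lemma sub (hu : ExpDominatedAt u r) (hv : ExpDominatedAt v r) :
    ExpDominatedAt (fun s y => u s y - v s y) r := by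
  simpa only [neg_one_mul, ← sub_eq_add_neg] using hu.add (hv.const_mul (-1))

lemma of_abs_le_pow_mul (hu : ExpDominatedAt u r) {A : ℝ} (hA : 0 ≤ A) (n : ℕ)
    (hv : ∀ᶠ s in 𝓝 r, ∀ y, |v s y| ≤ A * |y| ^ n * |u s y|) : ExpDominatedAt v r := by
  obtain ⟨C, c, hC, hc, hu⟩ := hu
  refine ⟨A * (n.factorial / (c / 2) ^ n) * C, c / 2, by positivity, half_pos hc, ?_⟩
  filter_upwards [hu, hv] with s hus hvs y
  have huy := hus y
  by_cases hy : y ∈ Ici (0 : ℝ)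
  · rw [indicator_of_mem hy] at huy ⊢
    have hy₀ : 0 ≤ y := hy
    have hpow : |y| ^ n ≤ n.factorial / (c / 2) ^ n * exp (c / 2 * y) := by
      have h := Real.pow_div_factorial_le_exp (c / 2 * y) (by positivity) n
      rw [abs_of_nonneg hy₀]
      rw [mul_pow, div_le_iff₀ (by positivity)] at h
      rw [div_mul_eq_mul_div, le_div_iff₀ (by positivity)]
      linarith
    calc |v s y| ≤ A * |y| ^ n * |u s y| := hvs y
      _ ≤ A * (n.factorial / (c / 2) ^ n * exp (c / 2 * y)) * (C * exp (-(c * y))) := by gcongr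
      _ = A * (n.factorial / (c / 2) ^ n) * C * (exp (c / 2 * y) * exp (-(c * y))) := by ring
      _ = A * (n.factorial / (c / 2) ^ n) * C * exp (-(c / 2 * y)) := by
          rw [← Real.exp_add]
          ring_nf
  · rw [indicator_of_notMem hy] at huy ⊢
    calc |v s y| ≤ A * |y| ^ n * |u s y| := hvs y
      _ ≤ A * |y| ^ n * 0 := by gcongr
      _ = 0 := mul_zero _

lemma mono (hu : ExpDominatedAt u r) (h : ∀ᶠ s in 𝓝 r, ∀ y, |v s y| ≤ |u s y|) :
    ExpDominatedAt v r :=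
  hu.of_abs_le_pow_mul zero_le_one 0 (by simpa only [pow_zero, one_mul] using h)

lemma mul_log (hu : ExpDominatedAt u r) (hu₀ : ∀ᶠ s in 𝓝 r, ∀ y, 0 ≤ u s y) :
    ExpDominatedAt (fun s y => u s y * log (u s y)) r := by
  obtain ⟨C, c, hC, hc, hu⟩ := hu
  refine ⟨2 * (√C * (1 + C)), c / 2, by positivity, half_pos hc, ?_⟩
  filter_upwards [hu, hu₀] with s hus hus₀ y
  have huy := hus y
  rw [abs_of_nonneg (hus₀ y)] at huy
  by_cases hy : y ∈ Ici (0 : ℝ)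
  · rw [indicator_of_mem hy] at huy ⊢
    have hexp : exp (-(c * y)) ≤ 1 := Real.exp_le_one_iff.2 (neg_nonpos.2 (mul_nonneg hc.le hy))
    calc |u s y * log (u s y)| ≤ 2 * (√(u s y) * (1 + u s y)) := abs_mul_log_le (hus₀ y)
      _ ≤ 2 * (√(C * exp (-(c * y))) * (1 + C)) := by
          gcongr
          · linarith [hus₀ y]
          · exact huy.trans (mul_le_of_le_one_right hC hexp)
      _ = 2 * (√C * (1 + C)) * exp (-(c / 2 * y)) := by
          rw [Real.sqrt_mul hC, ← Real.exp_half]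
          ring_nf
  · rw [indicator_of_notMem hy] at huy ⊢
    simp only [le_antisymm huy (hus₀ y), zero_mul, abs_zero, le_refl]

end ExpDominatedAt

/-- `f` is the density of a nonnegative random variable with a finite exponential moment of some
positive order. -/
structure IsExpTailedDensity (f : ℝ → ℝ) : Prop where
  nonneg : ∀ x, 0 ≤ f x
  integral_eq_one : ∫ x, f x = 1
  eq_zero_of_neg : ∀ x < 0, f x = 0
  exists_integrable_exp_mul : ∃ τ, 0 < τ ∧ Integrable fun x => exp (τ * x) * f x

/-- The cross entropy of the gamma convolution of shape `α + n` relative to that of shape `α`. For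
`n = 0` it is the differential entropy of the latter. -/
noncomputable def gammaCrossEntropy (f : ℝ → ℝ) (α : ℝ) (n : ℕ) (r : ℝ) : ℝ :=
  -∫ y, gammaConv f (α + n) r y * log (gammaConv f α r y)

/-- The mean, under the gamma convolution of shape `α + n`, of the ratio of the gamma convolutions
of shapes `i` and `α`. -/
noncomputable def gammaMeanRatio (f : ℝ → ℝ) (α : ℝ) (n : ℕ) (i r : ℝ) : ℝ :=
  ∫ y, gammaConv f (α + n) r y * (gammaConv f i r y / gammaConv f α r y)

namespace IsExpTailedDensity

variable {f : ℝ → ℝ} {α i k r : ℝ}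

lemma integrable (hf : IsExpTailedDensity f) : Integrable f :=
  integrable_of_integral_eq_one hf.integral_eq_one

lemma integrable_of_abs_le_mul_exp (hf : IsExpTailedDensity f) {w : ℝ → ℝ} (hw : Continuous w)
    {A τ : ℝ} (hτ : Integrable fun x => exp (τ * x) * f x)
    (hle : ∀ x, 0 ≤ x → |w x| ≤ A * exp (τ * x)) : Integrable fun x => w x * f x := by
  refine (hτ.const_mul A).mono' (hw.aestronglyMeasurable.mul hf.integrable.1)
    (ae_of_all _ fun x => ?_)
  rcases lt_or_ge x 0 with hx | hx
  · simp [hf.eq_zero_of_neg x hx]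
  · rw [Real.norm_eq_abs, abs_mul, abs_of_nonneg (hf.nonneg x), ← mul_assoc]
    exact mul_le_mul_of_nonneg_right (hle x hx) (hf.nonneg x)

lemma integrable_id_mul (hf : IsExpTailedDensity f) : Integrable fun x => x * f x := by
  obtain ⟨τ, hτ, hint⟩ := hf.exists_integrable_exp_mul
  refine hf.integrable_of_abs_le_mul_exp continuous_id hint (A := τ⁻¹) fun x hx => ?_
  rw [abs_of_nonneg hx, ← div_eq_inv_mul, le_div_iff₀ hτ]
  linarith [Real.add_one_le_exp (τ * x)]

lemma expDominatedAt_gammaConv (hf : IsExpTailedDensity f) (hk : 1 ≤ k) (hr : 0 < r) :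
    ExpDominatedAt (gammaConv f k) r := by
  obtain ⟨τ, hτ, hint⟩ := hf.exists_integrable_exp_mul
  obtain ⟨c, hc, hc'⟩ := exists_between (lt_min hτ hr)
  obtain ⟨hcτ, hcr⟩ := lt_min_iff.1 hc'
  obtain ⟨C, hC, hbound⟩ := exists_eventually_gammaPDFReal_le_mul_exp hk hr hcr
  have hmgf : Integrable fun x => exp (c * x) * f x := by
    refine hf.integrable_of_abs_le_mul_exp (by fun_prop) hint (A := 1) fun x hx => ?_
    rw [abs_of_pos (Real.exp_pos _), one_mul]
    gcongr
  have hmgf₀ : 0 ≤ ∫ x, exp (c * x) * f x :=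
    integral_nonneg fun x => mul_nonneg (Real.exp_pos _).le (hf.nonneg x)
  refine ⟨C * ∫ x, exp (c * x) * f x, c, mul_nonneg hC hmgf₀, hc, ?_⟩
  filter_upwards [hbound, lt_mem_nhds hr] with s hsC hs y
  rcases lt_or_ge y 0 with hy | hy
  · rw [gammaConv_of_neg hf.eq_zero_of_neg _ _ hy, abs_zero]
    exact indicator_nonneg (fun _ _ => by positivity) _
  rw [indicator_of_mem (mem_Ici.2 hy),
    abs_of_nonneg (gammaConv_nonneg hf.nonneg (by linarith) hs y)]
  calc gammaConv f k s y ≤ ∫ x, C * exp (-(c * y)) * (exp (c * x) * f x) := by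
        refine integral_mono (integrable_mul_gammaPDFReal hf.integrable hk hs y)
          (hmgf.const_mul _) fun x => ?_
        calc f x * gammaPDFReal k s (y - x) ≤ f x * (C * exp (-(c * (y - x)))) :=
              mul_le_mul_of_nonneg_left (hsC _) (hf.nonneg x)
          _ = C * exp (-(c * y)) * (exp (c * x) * f x) := by
              rw [show -(c * (y - x)) = -(c * y) + c * x by ring, Real.exp_add]
              ring
    _ = C * (∫ x, exp (c * x) * f x) * exp (-(c * y)) := by
        rw [integral_const_mul]
        ring

lemma gammaConv_mul_div (hf : IsExpTailedDensity f) (hα : 1 ≤ α) (hi : 1 ≤ i) (hr : 0 < r)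
    (y : ℝ) : gammaConv f α r y * (gammaConv f i r y / gammaConv f α r y) = gammaConv f i r y :=
  mul_div_cancel_of_imp' (gammaConv_eq_zero_of_eq_zero hf.integrable hf.nonneg hα hr hi hr)

lemma expDominatedAt_gammaConv_add_nat_mul (hf : IsExpTailedDensity f) (hα : 1 ≤ α) (hr : 0 < r)
    {t : ℝ → ℝ → ℝ} (ht : ExpDominatedAt (fun s y => gammaConv f α s y * t s y) r) (n : ℕ) :
    ExpDominatedAt (fun s y => gammaConv f (α + n) s y * t s y) r := by
  refine ht.of_abs_le_pow_mul (A := (2 * r / α) ^ n) (by positivity) n ?_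
  filter_upwards [lt_mem_nhds hr, gt_mem_nhds (by linarith : r < 2 * r)] with s hs hsr y
  have hαn : 0 < α + n := by positivity
  have hα₀ : 0 < α := by linarith
  have hF := gammaConv_nonneg hf.nonneg hα₀ hs y
  rw [abs_mul, abs_mul, abs_of_nonneg (gammaConv_nonneg hf.nonneg hαn hs y), abs_of_nonneg hF,
    ← mul_assoc, ← mul_pow]
  gcongr
  calc gammaConv f (α + n) s y ≤ (s / α * |y - 0|) ^ n * gammaConv f α s y :=
        gammaConv_add_nat_le hf.integrable hf.nonneg hα hs
          (ae_of_all _ hf.eq_zero_of_neg) n y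
    _ ≤ (2 * r / α * |y|) ^ n * gammaConv f α s y := by
        rw [sub_zero]
        gcongr

lemma expDominatedAt_gammaConv_add_nat_mul_log (hf : IsExpTailedDensity f) (hα : 1 ≤ α)
    (hr : 0 < r) (n : ℕ) :
    ExpDominatedAt (fun s y => gammaConv f (α + n) s y * log (gammaConv f α s y)) r :=
  hf.expDominatedAt_gammaConv_add_nat_mul hα hr
    ((hf.expDominatedAt_gammaConv hα hr).mul_log ((lt_mem_nhds hr).mono fun _ hs =>
      gammaConv_nonneg hf.nonneg (by linarith) hs)) n

lemma expDominatedAt_gammaConv_add_nat_mul_div (hf : IsExpTailedDensity f) (hα : 1 ≤ α)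
    (hi : 1 ≤ i) (hr : 0 < r) (n : ℕ) :
    ExpDominatedAt (fun s y => gammaConv f (α + n) s y * (gammaConv f i s y / gammaConv f α s y))
      r := by
  refine hf.expDominatedAt_gammaConv_add_nat_mul hα hr
    ((hf.expDominatedAt_gammaConv hi hr).mono ?_) n
  filter_upwards [lt_mem_nhds hr] with s hs y
  rw [hf.gammaConv_mul_div hα hi hs]

lemma expDominatedAt_gammaConv_add_nat_mul_div_sq (hf : IsExpTailedDensity f) (hα : 3 ≤ α)
    (hr : 0 < r) (n : ℕ) :
    ExpDominatedAt (fun s y => gammaConv f (α + n) s y *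
      (gammaConv f (α - 1) s y / gammaConv f α s y) ^ 2) r := by
  have hα₂ : 0 < α - 2 := by linarith
  have hα₁ : 0 < α - 1 := by linarith
  refine hf.expDominatedAt_gammaConv_add_nat_mul (by linarith) hr
    (((hf.expDominatedAt_gammaConv (by linarith : 1 ≤ α - 2) hr).const_mul
      ((α - 1) / (α - 2))).mono ?_) n
  filter_upwards [lt_mem_nhds hr] with s hs y
  have hcs := gammaConv_add_one_sq_le hf.integrable hf.nonneg (by linarith : 1 ≤ α - 2) hs y
  rw [show α - 2 + 1 = α - 1 by ring, sub_add_cancel] at hcs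
  have hF₂ := gammaConv_nonneg hf.nonneg hα₂ hs y
  rcases (gammaConv_nonneg hf.nonneg (by linarith : 0 < α) hs y).eq_or_lt with hF | hF
  · rw [← hF, zero_mul, abs_zero]
    exact abs_nonneg _
  · rw [abs_of_nonneg (by positivity), abs_of_nonneg (by positivity)]
    calc gammaConv f α s y * (gammaConv f (α - 1) s y / gammaConv f α s y) ^ 2
        = gammaConv f (α - 1) s y ^ 2 / gammaConv f α s y := by field_simp
      _ ≤ (α - 1) / (α - 2) * gammaConv f (α - 2) s y := by
          rw [div_le_iff₀ hF, mul_assoc]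
          exact hcs

lemma aemeasurable_gammaConv (hf : IsExpTailedDensity f) (hk : 0 < k) (hr : 0 < r) :
    AEMeasurable (gammaConv f k r) :=
  (integrable_gammaConv hf.integrable hk hr).aemeasurable

lemma integrable_gammaConv_add_nat_mul_log (hf : IsExpTailedDensity f) (hα : 1 ≤ α)
    (hr : 0 < r) (n : ℕ) :
    Integrable fun y => gammaConv f (α + n) r y * log (gammaConv f α r y) :=
  (hf.expDominatedAt_gammaConv_add_nat_mul_log hα hr n).integrable
    ((hf.aemeasurable_gammaConv (by positivity) hr).mul
      (hf.aemeasurable_gammaConv (by linarith) hr).log).aestronglyMeasurable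

lemma integrable_gammaConv_add_nat_mul_div (hf : IsExpTailedDensity f) (hα : 1 ≤ α)
    (hi : 1 ≤ i) (hr : 0 < r) (n : ℕ) :
    Integrable fun y => gammaConv f (α + n) r y * (gammaConv f i r y / gammaConv f α r y) :=
  (hf.expDominatedAt_gammaConv_add_nat_mul_div hα hi hr n).integrable
    ((hf.aemeasurable_gammaConv (by positivity) hr).mul
      ((hf.aemeasurable_gammaConv (by linarith) hr).div
        (hf.aemeasurable_gammaConv (by linarith) hr))).aestronglyMeasurable

lemma integrable_gammaConv_add_nat_mul_div_sq (hf : IsExpTailedDensity f) (hα : 3 ≤ α)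
    (hr : 0 < r) (n : ℕ) :
    Integrable fun y => gammaConv f (α + n) r y *
      (gammaConv f (α - 1) r y / gammaConv f α r y) ^ 2 :=
  (hf.expDominatedAt_gammaConv_add_nat_mul_div_sq hα hr n).integrable
    ((hf.aemeasurable_gammaConv (by positivity) hr).mul
      (((hf.aemeasurable_gammaConv (by linarith) hr).div
        (hf.aemeasurable_gammaConv (by linarith) hr)).pow_const 2)).aestronglyMeasurable

lemma gammaMeanRatio_zero (hf : IsExpTailedDensity f) (hα : 1 ≤ α) (hi : 1 ≤ i) (hr : 0 < r) :
    gammaMeanRatio f α 0 i r = 1 := by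
  simp only [gammaMeanRatio, Nat.cast_zero, add_zero, hf.gammaConv_mul_div hα hi hr]
  rw [integral_gammaConv hf.integrable (by linarith) hr, hf.integral_eq_one]

lemma hasDerivAt_gammaConv_mul_log_rate (hf : IsExpTailedDensity f) (hα : 1 ≤ α) (hk : 1 ≤ k)
    (hr : 0 < r) (y : ℝ) :
    HasDerivAt (fun s => gammaConv f k s y * log (gammaConv f α s y))
      (r⁻¹ * (k * (gammaConv f k r y * log (gammaConv f α r y)
          - gammaConv f (k + 1) r y * log (gammaConv f α r y))
        + α * (gammaConv f k r y
          - gammaConv f k r y * (gammaConv f (α + 1) r y / gammaConv f α r y)))) r := by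
  by_cases hF : gammaConv f α r y = 0
  · have hzero {l s : ℝ} (hl : 1 ≤ l) (hs : 0 < s) : gammaConv f l s y = 0 :=
      gammaConv_eq_zero_of_eq_zero hf.integrable hf.nonneg hα hr hl hs hF
    simp only [hzero hk hr, hzero (by linarith : 1 ≤ k + 1) hr, zero_mul, sub_self, mul_zero,
      add_zero]
    refine (hasDerivAt_const r (0 : ℝ)).congr_of_eventuallyEq ?_
    filter_upwards [lt_mem_nhds hr] with s hs
    rw [hzero hk hs, zero_mul]
  · refine ((hasDerivAt_gammaConv_rate hf.integrable hk hr y).mul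
      ((hasDerivAt_gammaConv_rate hf.integrable hα hr y).log hF)).congr_deriv ?_
    field_simp

lemma hasDerivAt_gammaCrossEntropy (hf : IsExpTailedDensity f) (hα : 1 ≤ α) (hr : 0 < r)
    (n : ℕ) :
    HasDerivAt (gammaCrossEntropy f α n)
      (r⁻¹ * ((α + n) * (gammaCrossEntropy f α n r - gammaCrossEntropy f α (n + 1) r)
        - α * (1 - gammaMeanRatio f α n (α + 1) r))) r := by
  have hαn : 1 ≤ α + n := by linarith [n.cast_nonneg (α := ℝ)]
  have hα₁ : 1 ≤ α + 1 := by linarith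
  have hsucc : α + (n + 1 : ℕ) = α + n + 1 := by push_cast; ring
  have hlog := hf.expDominatedAt_gammaConv_add_nat_mul_log hα hr n
  have hlog' := hsucc ▸ hf.expDominatedAt_gammaConv_add_nat_mul_log hα hr (n + 1)
  have hdiv := hf.expDominatedAt_gammaConv_add_nat_mul_div hα hα₁ hr n
  have ilog := hf.integrable_gammaConv_add_nat_mul_log hα hr n
  have ilog' := hsucc ▸ hf.integrable_gammaConv_add_nat_mul_log hα hr (n + 1)
  have idiv := hf.integrable_gammaConv_add_nat_mul_div hα hα₁ hr n
  have iF := integrable_gammaConv hf.integrable (by linarith : 0 < α + n) hr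
  have isum := ((ilog.sub' ilog').const_mul (α + n)).fun_add ((iF.sub' idiv).const_mul α)
  have key := hlog.hasDerivAt_integral
    ((((hlog.sub hlog').const_mul (α + n)).add
      (((hf.expDominatedAt_gammaConv hαn hr).sub hdiv).const_mul α)).mul_of_continuousAt
        (continuousAt_inv₀ hr.ne'))
    ((lt_mem_nhds hr).mono fun s hs => (hf.integrable_gammaConv_add_nat_mul_log hα hs n).1)
    (isum.const_mul r⁻¹).1 ((lt_mem_nhds hr).mono fun s hs y =>
      hf.hasDerivAt_gammaConv_mul_log_rate hα hαn hs y)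
  refine key.neg.congr_deriv ?_
  rw [integral_const_mul, integral_add ((ilog.sub' ilog').const_mul _) ((iF.sub' idiv).const_mul _),
    integral_const_mul, integral_const_mul, integral_sub ilog ilog', integral_sub iF idiv,
    integral_gammaConv hf.integrable (by linarith) hr, hf.integral_eq_one]
  simp only [gammaCrossEntropy, gammaMeanRatio, hsucc]
  ring

end IsExpTailedDensity

lemma hasDerivAt_zero_of_abs_le_abs_sub_mul {g w : ℝ → ℝ} {y : ℝ} (hw : Tendsto w (𝓝 y) (𝓝 0))
    (hg : ∀ x, |g x| ≤ |x - y| * w x) : HasDerivAt g 0 y := by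
  have hgy : g y = 0 := abs_nonpos_iff.1 ((hg y).trans_eq (by rw [sub_self, abs_zero, zero_mul]))
  rw [hasDerivAt_iff_isLittleO]
  simp only [hgy, smul_zero, sub_zero]
  have hle : g =O[𝓝 y] fun x => (x - y) * w x :=
    Asymptotics.IsBigO.of_bound 1 (Eventually.of_forall fun x => by
      rw [one_mul, Real.norm_eq_abs, Real.norm_eq_abs, abs_mul]
      exact (hg x).trans (mul_le_mul_of_nonneg_left (le_abs_self _) (abs_nonneg _)))
  refine hle.trans_isLittleO ?_
  simpa only [mul_one] using
    (Asymptotics.isBigO_refl (fun x => x - y) (𝓝 y)).mul_isLittleO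
      ((Asymptotics.isLittleO_one_iff ℝ).2 hw)

namespace IsExpTailedDensity

variable {f : ℝ → ℝ} {α r : ℝ}

/-- The factor `t` may be singular at the zeros of `gammaConv f α r`; there the product has
derivative `0`, because `gammaConv f (α + n + 1) r` vanishes to higher order. -/
lemma hasDerivAt_gammaConv_add_nat_succ_mul (hf : IsExpTailedDensity f) (hα : 1 ≤ α) (hr : 0 < r)
    (n : ℕ) {t t' : ℝ → ℝ} (ht : Continuous fun y => gammaConv f α r y * t y)
    (ht' : ∀ y, gammaConv f α r y ≠ 0 → HasDerivAt t (r * t' y) y) (y : ℝ) :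
    HasDerivAt (fun y => gammaConv f (α + (n + 1 : ℕ)) r y * t y)
      (r * (gammaConv f (α + n) r y * t y - gammaConv f (α + (n + 1 : ℕ)) r y * t y
        + gammaConv f (α + (n + 1 : ℕ)) r y * t' y)) y := by
  have hαn : 1 ≤ α + n := by linarith [n.cast_nonneg (α := ℝ)]
  have hsucc : α + (n + 1 : ℕ) = α + n + 1 := by push_cast; ring
  by_cases hF : gammaConv f α r y = 0
  · have hzero {l : ℝ} (hl : 1 ≤ l) : gammaConv f l r y = 0 :=
      gammaConv_eq_zero_of_eq_zero hf.integrable hf.nonneg hα hr hl hr hF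
    have hleft : ∀ᵐ x, x < y → f x = 0 :=
      (gammaConv_eq_zero_iff hf.integrable hf.nonneg hα hr).1 hF
    set w : ℝ → ℝ := fun x => (r / α) ^ (n + 1) * |x - y| ^ n * |gammaConv f α r x * t x|
    have hw : Continuous w := by fun_prop
    have hwy : w y = 0 := by simp only [w, hF, zero_mul, abs_zero, mul_zero]
    rw [hzero hαn, hzero (hsucc ▸ by linarith : 1 ≤ α + (n + 1 : ℕ)), zero_mul, zero_mul, sub_zero,
      add_zero, mul_zero]
    refine hasDerivAt_zero_of_abs_le_abs_sub_mul (hwy ▸ hw.tendsto y) fun x => ?_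
    have hα₀ : 0 < α := by linarith
    rw [abs_mul, abs_of_nonneg (gammaConv_nonneg hf.nonneg (by positivity) hr x)]
    calc gammaConv f (α + (n + 1 : ℕ)) r x * |t x|
        ≤ (r / α * |x - y|) ^ (n + 1) * gammaConv f α r x * |t x| := by
          gcongr
          exact gammaConv_add_nat_le hf.integrable hf.nonneg hα hr hleft (n + 1) x
      _ = |x - y| * w x := by
          simp only [w, abs_mul, abs_of_nonneg (gammaConv_nonneg hf.nonneg hα₀ hr x)]
          ring
  · rw [hsucc]
    refine ((hasDerivAt_gammaConv hf.integrable (by linarith : 2 ≤ α + n + 1) hr y).mul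
      (ht' y hF)).congr_deriv ?_
    rw [add_sub_cancel_right]
    ring

lemma integral_gammaConv_add_nat_by_parts (hf : IsExpTailedDensity f) (hα : 1 ≤ α) (hr : 0 < r)
    (n : ℕ) {t t' : ℝ → ℝ} (ht : Continuous fun y => gammaConv f α r y * t y)
    (ht' : ∀ y, gammaConv f α r y ≠ 0 → HasDerivAt t (r * t' y) y)
    (hint : ∀ m : ℕ, Integrable fun y => gammaConv f (α + m) r y * t y)
    (hint' : Integrable fun y => gammaConv f (α + (n + 1 : ℕ)) r y * t' y) :
    (∫ y, gammaConv f (α + n) r y * t y) - (∫ y, gammaConv f (α + (n + 1 : ℕ)) r y * t y)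
      + ∫ y, gammaConv f (α + (n + 1 : ℕ)) r y * t' y = 0 := by
  have hsub := (hint n).sub' (hint (n + 1))
  have key := integral_eq_zero_of_hasDerivAt_of_integrable
    (hf.hasDerivAt_gammaConv_add_nat_succ_mul hα hr n ht ht')
    ((hsub.fun_add hint').const_mul r) (hint (n + 1))
  rw [integral_const_mul, integral_add hsub hint', integral_sub (hint n) (hint (n + 1))] at key
  exact (mul_eq_zero.1 key).resolve_left hr.ne'

lemma gammaCrossEntropy_sub_succ (hf : IsExpTailedDensity f) (hα : 2 ≤ α) (hr : 0 < r) (n : ℕ) :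
    gammaCrossEntropy f α n r - gammaCrossEntropy f α (n + 1) r =
      gammaMeanRatio f α (n + 1) (α - 1) r - 1 := by
  have hα₁ : 1 ≤ α := by linarith
  have iF := integrable_gammaConv hf.integrable (by positivity : 0 < α + (n + 1 : ℕ)) hr
  have iratio := hf.integrable_gammaConv_add_nat_mul_div hα₁ (by linarith : 1 ≤ α - 1) hr (n + 1)
  have key := hf.integral_gammaConv_add_nat_by_parts hα₁ hr n
    (t := fun y => log (gammaConv f α r y))
    (t' := fun y => gammaConv f (α - 1) r y / gammaConv f α r y - 1)
    (Real.continuous_mul_log.comp (continuous_gammaConv hf.integrable hα hr))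
    (fun y hF => ((hasDerivAt_gammaConv hf.integrable hα hr y).log hF).congr_deriv (by field_simp))
    (hf.integrable_gammaConv_add_nat_mul_log hα₁ hr)
    (by simpa only [mul_sub_one] using iratio.sub' iF)
  simp only [mul_sub_one] at key
  rw [integral_sub iratio iF, integral_gammaConv hf.integrable (by positivity) hr,
    hf.integral_eq_one] at key
  rw [gammaCrossEntropy, gammaCrossEntropy, gammaMeanRatio]
  linarith

lemma gammaMeanRatio_sub_succ (hf : IsExpTailedDensity f) (hα : 3 ≤ α) (hr : 0 < r) (n : ℕ) :
    gammaMeanRatio f α n (α - 1) r - gammaMeanRatio f α (n + 1) (α - 1) r =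
      (∫ y, gammaConv f (α + (n + 1 : ℕ)) r y *
        (gammaConv f (α - 1) r y / gammaConv f α r y) ^ 2)
      - gammaMeanRatio f α (n + 1) (α - 2) r := by
  have hα₁ : 1 ≤ α := by linarith
  have hα₂ : 1 ≤ α - 1 := by linarith
  have iratio := hf.integrable_gammaConv_add_nat_mul_div hα₁ (by linarith : 1 ≤ α - 2) hr (n + 1)
  have isq := hf.integrable_gammaConv_add_nat_mul_div_sq hα hr (n + 1)
  have key := hf.integral_gammaConv_add_nat_by_parts hα₁ hr n
    (t := fun y => gammaConv f (α - 1) r y / gammaConv f α r y)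
    (t' := fun y => gammaConv f (α - 2) r y / gammaConv f α r y
      - (gammaConv f (α - 1) r y / gammaConv f α r y) ^ 2)
    (by
      simp only [hf.gammaConv_mul_div hα₁ hα₂ hr]
      exact continuous_gammaConv hf.integrable (by linarith) hr)
    (fun y hF => ((hasDerivAt_gammaConv hf.integrable (by linarith : 2 ≤ α - 1) hr y).div
      (hasDerivAt_gammaConv hf.integrable (by linarith) hr y) hF).congr_deriv (by
        rw [show α - 1 - 1 = α - 2 by ring]
        field_simp
        ring))
    (hf.integrable_gammaConv_add_nat_mul_div hα₁ hα₂ hr)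
    (by simpa only [mul_sub] using iratio.sub' isq)
  simp only [mul_sub] at key
  rw [integral_sub iratio isq] at key
  simp only [gammaMeanRatio]
  linarith

end IsExpTailedDensity

lemma hasDerivAt_comp_inv_sqrt {φ : ℝ → ℝ} {D b : ℝ} (hb : 0 < b)
    (hφ : HasDerivAt φ ((√b)⁻¹⁻¹ * D) (√b)⁻¹) :
    HasDerivAt (fun b => φ (√b)⁻¹) (-(D / (2 * b))) b := by
  have hs : √b ≠ 0 := (Real.sqrt_pos.2 hb).ne'
  refine (hφ.comp b ((Real.hasDerivAt_sqrt hb.ne').inv hs)).congr_deriv ?_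
  rw [Real.sq_sqrt hb.le]
  field_simp

/-- The conditional mean `E[X | Y = y]` when `X` has density `f` and `Y - X` is independent of `X`
with a gamma distribution of shape `k` and rate `r`. -/
noncomputable def gammaCondMean (f : ℝ → ℝ) (k r y : ℝ) : ℝ :=
  (∫ x, x * f x * gammaPDFReal k r (y - x)) / gammaConv f k r y

/-- The conditional second moment `E[(Y - X)² | Y = y]` of the noise when `X` has density `f` and
`Y - X` is independent of `X` with a gamma distribution of shape `k` and rate `r`. -/
noncomputable def gammaCondSqDev (f : ℝ → ℝ) (k r y : ℝ) : ℝ :=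
  (∫ x, (y - x) ^ 2 * f x * gammaPDFReal k r (y - x)) / gammaConv f k r y

lemma gammaCondSqDev_eq (f : ℝ → ℝ) {k r : ℝ} (hk : 0 < k) (hr : 0 < r) (y : ℝ) :
    gammaCondSqDev f k r y =
      k * (k + 1) / r ^ 2 * (gammaConv f (k + (2 : ℕ)) r y / gammaConv f k r y) := by
  rw [gammaCondSqDev, integral_sq_sub_mul_mul_gammaPDFReal f hk hr, Nat.cast_two, mul_div_assoc]

lemma integral_gammaConv_mul_gammaCondSqDev (f : ℝ → ℝ) {k r : ℝ} (hk : 0 < k) (hr : 0 < r)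
    (i : ℝ) :
    ∫ y, gammaConv f i r y * gammaCondSqDev f k r y =
      k * (k + 1) / r ^ 2 * gammaMeanRatio f k 2 i r := by
  rw [gammaMeanRatio, ← integral_const_mul]
  congr with y
  rw [gammaCondSqDev_eq f hk hr]
  ring

lemma deriv_gammaConv_inv_sqrt {f : ℝ → ℝ} {k b : ℝ} (hf : Integrable f) (hk : 1 ≤ k)
    (hb : 0 < b) (y : ℝ) :
    deriv (fun c => gammaConv f k (√c)⁻¹ y) b =
      -(k * (gammaConv f k (√b)⁻¹ y - gammaConv f (k + 1) (√b)⁻¹ y) / (2 * b)) := by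
  refine (hasDerivAt_comp_inv_sqrt (φ := fun r => gammaConv f k r y) hb
    ((hasDerivAt_gammaConv_rate hf hk (by positivity) y).congr_deriv ?_)).deriv
  ring

namespace IsExpTailedDensity

variable {f : ℝ → ℝ} {α r a b : ℝ}

lemma integral_gammaConv_mul_gammaCondMean (hf : IsExpTailedDensity f) (hα : 2 ≤ α) (hr : 0 < r) :
    ∫ y, gammaConv f (α - 1) r y * gammaCondMean f α r y =
      (∫ x, x * f x) + (α - 1) / r - α / r * gammaMeanRatio f α 1 (α - 1) r := by
  have hα₁ : 1 ≤ α - 1 := by linarith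
  have hα₀ : 1 ≤ α := by linarith
  have iratio := hf.integrable_gammaConv_add_nat_mul_div hα₀ hα₁ hr 1
  have hpoint (y : ℝ) : gammaConv f (α - 1) r y * gammaCondMean f α r y =
      y * gammaConv f (α - 1) r y - α / r * (gammaConv f (α + (1 : ℕ)) r y *
        (gammaConv f (α - 1) r y / gammaConv f α r y)) := by
    have hcancel := hf.gammaConv_mul_div hα₀ hα₁ hr y
    rw [gammaCondMean, integral_id_mul_mul_gammaPDFReal hf.integrable hα₀ hr, Nat.cast_one]
    linear_combination y * hcancel
  simp_rw [hpoint]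
  rw [integral_sub (integrable_mul_gammaConv hf.integrable hf.integrable_id_mul hα₁ hr)
    (iratio.const_mul _), integral_const_mul,
    integral_mul_gammaConv hf.integrable hf.integrable_id_mul hα₁ hr, hf.integral_eq_one, mul_one,
    gammaMeanRatio]

lemma integral_gammaConv_mul_gammaCondSqDev_div (hf : IsExpTailedDensity f) (hα : 2 ≤ α)
    (hr : 0 < r) :
    (α - 1) * ∫ y, gammaConv f (α - 1) r y *
        (gammaCondSqDev f α r y / (y - gammaCondMean f (α - 1) r y)) =
      α * (α + 1) / r * ∫ y, gammaConv f (α + (2 : ℕ)) r y *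
        (gammaConv f (α - 1) r y / gammaConv f α r y) ^ 2 := by
  have hα₁ : 1 ≤ α - 1 := by linarith
  rw [← integral_const_mul, ← integral_const_mul]
  congr with y
  rw [gammaCondSqDev_eq f (by linarith) hr, gammaCondMean,
    integral_id_mul_mul_gammaPDFReal hf.integrable hα₁ hr, sub_add_cancel]
  by_cases hF : gammaConv f α r y = 0
  · simp only [hF, div_zero, mul_zero, zero_div, ne_eq, OfNat.ofNat_ne_zero, not_false_eq_true,
      zero_pow]
  · have hF₁ : gammaConv f (α - 1) r y ≠ 0 := fun h => hF
      (gammaConv_eq_zero_of_eq_zero hf.integrable hf.nonneg hα₁ hr (by linarith) hr h)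
    have hα₁' : α - 1 ≠ 0 := by linarith
    have hdev : y - (y * gammaConv f (α - 1) r y - (α - 1) / r * gammaConv f α r y) /
        gammaConv f (α - 1) r y =
          (α - 1) / r * (gammaConv f α r y / gammaConv f (α - 1) r y) := by
      field_simp
      ring
    rw [hdev]
    field_simp

lemma integral_deriv_gammaConv_sq_div (hf : IsExpTailedDensity f) (hα : 1 ≤ α) (ha : 0 < a) :
    ∫ y, deriv (fun b => gammaConv f α (√b)⁻¹ y) a ^ 2 / gammaConv f α (√a)⁻¹ y =
      α ^ 2 / (4 * a ^ 2) * (gammaMeanRatio f α 1 (α + 1) (√a)⁻¹ - 1) := by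
  have hr : 0 < (√a)⁻¹ := by positivity
  have hα₁ : 1 ≤ α + 1 := by linarith
  have iratio := hf.integrable_gammaConv_add_nat_mul_div hα hα₁ hr 1
  have iF := integrable_gammaConv hf.integrable (by linarith : 0 < α) hr
  have iF' := integrable_gammaConv hf.integrable (by linarith : 0 < α + 1) hr
  have hpoint (y : ℝ) : deriv (fun b => gammaConv f α (√b)⁻¹ y) a ^ 2 / gammaConv f α (√a)⁻¹ y =
      α ^ 2 / (4 * a ^ 2) * (gammaConv f (α + (1 : ℕ)) (√a)⁻¹ y *
        (gammaConv f (α + 1) (√a)⁻¹ y / gammaConv f α (√a)⁻¹ y)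
        - 2 * gammaConv f (α + 1) (√a)⁻¹ y + gammaConv f α (√a)⁻¹ y) := by
    rw [deriv_gammaConv_inv_sqrt hf.integrable hα ha, Nat.cast_one]
    by_cases hF : gammaConv f α (√a)⁻¹ y = 0
    · rw [hF, gammaConv_eq_zero_of_eq_zero hf.integrable hf.nonneg hα hr hα₁ hr hF]
      ring
    · generalize gammaConv f α (√a)⁻¹ y = F at hF ⊢
      field_simp
      ring
  simp_rw [hpoint]
  rw [integral_const_mul, integral_add (iratio.sub' (iF'.const_mul 2)) iF,
    integral_sub iratio (iF'.const_mul 2), integral_const_mul,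
    integral_gammaConv hf.integrable (by linarith) hr,
    integral_gammaConv hf.integrable (by linarith) hr, hf.integral_eq_one, gammaMeanRatio]
  ring

lemma hasDerivAt_gammaCrossEntropy_inv_sqrt (hf : IsExpTailedDensity f) (hα : 1 ≤ α) (hb : 0 < b)
    (n : ℕ) :
    HasDerivAt (fun b => gammaCrossEntropy f α n (√b)⁻¹)
      (-(((α + n) * (gammaCrossEntropy f α n (√b)⁻¹ - gammaCrossEntropy f α (n + 1) (√b)⁻¹)
        - α * (1 - gammaMeanRatio f α n (α + 1) (√b)⁻¹)) / (2 * b))) b :=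
  hasDerivAt_comp_inv_sqrt hb (hf.hasDerivAt_gammaCrossEntropy hα (by positivity) n)

lemma deriv_gammaCrossEntropy_zero_inv_sqrt (hf : IsExpTailedDensity f) (hα : 1 ≤ α)
    (hb : 0 < b) :
    deriv (fun b => gammaCrossEntropy f α 0 (√b)⁻¹) b =
      -(α / 2) * ((gammaCrossEntropy f α 0 (√b)⁻¹ - gammaCrossEntropy f α 1 (√b)⁻¹) * b⁻¹) := by
  rw [(hf.hasDerivAt_gammaCrossEntropy_inv_sqrt hα hb 0).deriv,
    hf.gammaMeanRatio_zero hα (by linarith) (by positivity)]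
  simp only [Nat.cast_zero, add_zero, zero_add, sub_self, mul_zero, sub_zero]
  ring

lemma hasDerivAt_deriv_gammaCrossEntropy_zero_inv_sqrt (hf : IsExpTailedDensity f) (hα : 3 ≤ α)
    (ha : 0 < a) :
    HasDerivAt (deriv fun b => gammaCrossEntropy f α 0 (√b)⁻¹)
      (α / (4 * a ^ 2) * ((α + 1) *
          ((∫ y, gammaConv f (α + (2 : ℕ)) (√a)⁻¹ y *
              (gammaConv f (α - 1) (√a)⁻¹ y / gammaConv f α (√a)⁻¹ y) ^ 2)
            - gammaMeanRatio f α 2 (α - 2) (√a)⁻¹)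
          + gammaMeanRatio f α 1 (α - 1) (√a)⁻¹ - 1)
        - ∫ y, deriv (fun b => gammaConv f α (√b)⁻¹ y) a ^ 2 / gammaConv f α (√a)⁻¹ y) a := by
  have hr : 0 < (√a)⁻¹ := by positivity
  have hα₁ : 1 ≤ α := by linarith
  have hα₂ : 2 ≤ α := by linarith
  have hderiv : deriv (fun b => gammaCrossEntropy f α 0 (√b)⁻¹) =ᶠ[𝓝 a] fun b =>
      -(α / 2) * ((gammaCrossEntropy f α 0 (√b)⁻¹ - gammaCrossEntropy f α 1 (√b)⁻¹) * b⁻¹) :=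
    (lt_mem_nhds ha).mono fun b hb => hf.deriv_gammaCrossEntropy_zero_inv_sqrt hα₁ hb
  have hdiff := (hf.hasDerivAt_gammaCrossEntropy_inv_sqrt hα₁ ha 0).fun_sub
    (hf.hasDerivAt_gammaCrossEntropy_inv_sqrt hα₁ ha 1)
  have key := (hdiff.fun_mul (hasDerivAt_inv ha.ne')).const_mul (-(α / 2))
  refine (key.congr_of_eventuallyEq hderiv).congr_deriv ?_
  have h₀ := hf.gammaCrossEntropy_sub_succ hα₂ hr 0
  have h₁ := hf.gammaCrossEntropy_sub_succ hα₂ hr 1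
  have hratio := hf.gammaMeanRatio_sub_succ hα hr 1
  rw [hf.integral_deriv_gammaConv_sq_div hα₁ ha]
  simp only [Nat.cast_zero, Nat.cast_one, add_zero, zero_add, Nat.reduceAdd] at h₀ h₁ hratio ⊢
  rw [hf.gammaMeanRatio_zero hα₁ (by linarith) hr, h₀, h₁]
  linear_combination α * (α + 1) / (4 * a ^ 2) * hratio

lemma hasDerivAt_deriv_gammaCrossEntropy_zero_condMean (hf : IsExpTailedDensity f) (hα : 3 ≤ α)
    (ha : 0 < a) :
    HasDerivAt (deriv fun b => gammaCrossEntropy f α 0 (√b)⁻¹)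
      (-(1 / (4 * a ^ 3)) * (∫ y, gammaConv f (α - 2) (√a)⁻¹ y * gammaCondSqDev f α (√a)⁻¹ y)
        - (1 / (4 * a ^ 2 * √a)) *
          (∫ y, gammaConv f (α - 1) (√a)⁻¹ y * gammaCondMean f α (√a)⁻¹ y)
        + ((α - 1) / (4 * a ^ 2 * √a)) * (∫ y, gammaConv f (α - 1) (√a)⁻¹ y *
          (gammaCondSqDev f α (√a)⁻¹ y / (y - gammaCondMean f (α - 1) (√a)⁻¹ y)))
        - (∫ y, deriv (fun b => gammaConv f α (√b)⁻¹ y) a ^ 2 / gammaConv f α (√a)⁻¹ y)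
        - (1 / (4 * a ^ 2 * √a)) * (√a - ∫ x, x * f x)) a := by
  have hr : 0 < (√a)⁻¹ := by positivity
  have hs : √a ≠ 0 := (Real.sqrt_pos.2 ha).ne'
  have hα₂ : 2 ≤ α := by linarith
  have hmean := hf.integral_gammaConv_mul_gammaCondMean hα₂ hr
  have hdev := integral_gammaConv_mul_gammaCondSqDev f (by linarith : 0 < α) hr (α - 2)
  have hdiv := hf.integral_gammaConv_mul_gammaCondSqDev_div hα₂ hr
  refine (hf.hasDerivAt_deriv_gammaCrossEntropy_zero_inv_sqrt hα ha).congr_deriv ?_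
  rw [hmean, hdev, div_mul_eq_mul_div (α - 1), hdiv]
  simp only [inv_pow, Real.sq_sqrt ha.le, div_inv_eq_mul]
  generalize (∫ y, gammaConv f (α + (2 : ℕ)) (√a)⁻¹ y *
    (gammaConv f (α - 1) (√a)⁻¹ y / gammaConv f α (√a)⁻¹ y) ^ 2) = T
  generalize gammaMeanRatio f α 2 (α - 2) (√a)⁻¹ = S
  generalize gammaMeanRatio f α 1 (α - 1) (√a)⁻¹ = Q
  field_simp
  ring

end IsExpTailedDensity

theorem entropy_second_derivative_gamma_noise_general
    (fX : ℝ → ℝ)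
    (hfX_nonneg : ∀ x, 0 ≤ fX x) (hfX_prob : (∫ x, fX x) = 1)
    (hfX_supp : ∀ x, x < 0 → fX x = 0)
    (hfX_mgf : ∃ t : ℝ, 0 < t ∧ Integrable (fun x => Real.exp (t * x) * fX x))
    (α : ℝ) (hα : 3 ≤ α)
    (g : ℝ → ℝ → ℝ)
    (hg : ∀ k w : ℝ, g k w =
      if 0 ≤ w then w ^ (k - 1) * Real.exp (-w) / Real.Gamma k else 0)
    (fYk : ℝ → ℝ → ℝ → ℝ)
    (hfYk : ∀ k b y, fYk k b y =
      ∫ x, fX x * ((Real.sqrt b)⁻¹ * g k ((y - x) / Real.sqrt b)))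
    (a : ℝ) (ha : 0 < a)
    (m : ℝ → ℝ)
    (hm : ∀ y, m y =
      (∫ x, x * fX x * ((Real.sqrt a)⁻¹ * g α ((y - x) / Real.sqrt a))) /
        fYk α a y)
    (v : ℝ → ℝ)
    (hv : ∀ y, v y =
      (∫ x, (y - x) ^ 2 * fX x * ((Real.sqrt a)⁻¹ * g α ((y - x) / Real.sqrt a))) /
        fYk α a y)
    (mam1 : ℝ → ℝ)
    (hmam1 : ∀ y, mam1 y =
      (∫ x, x * fX x * ((Real.sqrt a)⁻¹ * g (α - 1) ((y - x) / Real.sqrt a))) /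
        fYk (α - 1) a y)
    (h : ℝ → ℝ)
    (hh : ∀ b, 0 < b → h b = -∫ y, fYk α b y * Real.log (fYk α b y))
    (Ja : ℝ)
    (hJa : Ja = ∫ y, (deriv (fun b => fYk α b y) a) ^ 2 / fYk α a y) :
    HasDerivAt (deriv h)
      (-(1 / (4 * a ^ 3)) * (∫ y, fYk (α - 2) a y * v y)
      - (1 / (4 * a ^ 2 * Real.sqrt a)) * (∫ y, fYk (α - 1) a y * m y)
      + ((α - 1) / (4 * a ^ 2 * Real.sqrt a)) *
          (∫ y, fYk (α - 1) a y * (v y / (y - mam1 y)))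
      - Ja
      - (1 / (4 * a ^ 2 * Real.sqrt a)) * (Real.sqrt a - ∫ x, x * fX x)) a := by
  have hf : IsExpTailedDensity fX := ⟨hfX_nonneg, hfX_prob, hfX_supp, hfX_mgf⟩
  have hkernel {b : ℝ} (hb : 0 < b) (k z : ℝ) :
      (√b)⁻¹ * g k (z / √b) = gammaPDFReal k (√b)⁻¹ z := by
    rw [hg, ← gammaPDFReal_one_right, inv_mul_gammaPDFReal_div (Real.sqrt_pos.2 hb)]
  have hconv (k : ℝ) {b : ℝ} (hb : 0 < b) : fYk k b = gammaConv fX k (√b)⁻¹ :=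
    funext fun y => by simp only [hfYk, hkernel hb, gammaConv]
  have hm_eq : m = gammaCondMean fX α (√a)⁻¹ :=
    funext fun y => by simp only [hm, hkernel ha, hconv _ ha, gammaCondMean]
  have hv_eq : v = gammaCondSqDev fX α (√a)⁻¹ :=
    funext fun y => by simp only [hv, hkernel ha, hconv _ ha, gammaCondSqDev]
  have hmam1_eq : mam1 = gammaCondMean fX (α - 1) (√a)⁻¹ :=
    funext fun y => by simp only [hmam1, hkernel ha, hconv _ ha, gammaCondMean]
  have hderiv (y : ℝ) :
      deriv (fun b => fYk α b y) a = deriv (fun b => gammaConv fX α (√b)⁻¹ y) a :=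
    EventuallyEq.deriv_eq ((lt_mem_nhds ha).mono fun b hb => congrFun (hconv α hb) y)
  have hentropy : h =ᶠ[𝓝 a] fun b => gammaCrossEntropy fX α 0 (√b)⁻¹ :=
    (lt_mem_nhds ha).mono fun b hb => by
      simp only [hh b hb, hconv _ hb, gammaCrossEntropy, Nat.cast_zero, add_zero]
  simp only [hJa, hderiv, hconv _ ha, hm_eq, hv_eq, hmam1_eq]
  exact (hf.hasDerivAt_deriv_gammaCrossEntropy_zero_condMean hα ha).congr_of_eventuallyEq
    hentropy.deriv

/-- **Second derivative of the differential entropy for gamma noise.**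
For a nonnegative `X` with an existing moment generating function and
independent `Gamma(α,1)` noise with `α ≥ 3`,
`d²/da² h(Y) = −(1/(4a³)) ∫ f_{Y_{α−2}} v dy − (1/(4a²√a)) ∫ f_{Y_{α−1}} m dy
  + ((α−1)/(4a²√a)) ∫ f_{Y_{α−1}} v/(y − m_{α−1}) dy − J_a
  − (1/(4a²√a))(√a − E[X])`. -/
theorem entropy_second_derivative_gamma_noise
    (fX : ℝ → ℝ)
    (hfX_nonneg : ∀ x, 0 ≤ fX x) (hfX_prob : (∫ x, fX x) = 1)
    (hfX_supp : ∀ x, x < 0 → fX x = 0)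
    (hfX_mgf : ∀ s : ℝ, Integrable (fun x => Real.exp (s * x) * fX x))
    (α : ℝ) (hα : 3 ≤ α)
    (g : ℝ → ℝ → ℝ)
    (hg : ∀ k w : ℝ, g k w =
      if 0 ≤ w then w ^ (k - 1) * Real.exp (-w) / Real.Gamma k else 0)
    (fYk : ℝ → ℝ → ℝ → ℝ)
    (hfYk : ∀ k b y, fYk k b y =
      ∫ x, fX x * ((Real.sqrt b)⁻¹ * g k ((y - x) / Real.sqrt b)))
    (a : ℝ) (ha : 0 < a)
    (m : ℝ → ℝ)
    (hm : ∀ y, m y =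
      (∫ x, x * fX x * ((Real.sqrt a)⁻¹ * g α ((y - x) / Real.sqrt a))) /
        fYk α a y)
    (v : ℝ → ℝ)
    (hv : ∀ y, v y =
      (∫ x, (y - x) ^ 2 * fX x * ((Real.sqrt a)⁻¹ * g α ((y - x) / Real.sqrt a))) /
        fYk α a y)
    (mam1 : ℝ → ℝ)
    (hmam1 : ∀ y, mam1 y =
      (∫ x, x * fX x * ((Real.sqrt a)⁻¹ * g (α - 1) ((y - x) / Real.sqrt a))) /
        fYk (α - 1) a y)
    (h : ℝ → ℝ)
    (hh : ∀ b, 0 < b → h b = -∫ y, fYk α b y * Real.log (fYk α b y))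
    (Ja : ℝ)
    (hJa : Ja = ∫ y, (deriv (fun b => fYk α b y) a) ^ 2 / fYk α a y) :
    deriv (deriv h) a =
      -(1 / (4 * a ^ 3)) * (∫ y, fYk (α - 2) a y * v y)
      - (1 / (4 * a ^ 2 * Real.sqrt a)) * (∫ y, fYk (α - 1) a y * m y)
      + ((α - 1) / (4 * a ^ 2 * Real.sqrt a)) *
          (∫ y, fYk (α - 1) a y * (v y / (y - mam1 y)))
      - Ja
      - (1 / (4 * a ^ 2 * Real.sqrt a)) * (Real.sqrt a - ∫ x, x * fX x) :=
  (entropy_second_derivative_gamma_noise_general fX hfX_nonneg hfX_prob hfX_supp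
    ⟨1, one_pos, hfX_mgf 1⟩ α hα g hg fYk hfYk a ha m hm v hv mam1 hmam1 h hh Ja hJa).deriv
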